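/- arXiv:nlin/0512074 — 5 statements merged into one kernel-verified Lean document; each statement's English description precedes it below -/
import Mathlib

section
/- Let (S^1,S^2) be a Lax–Sato pair satisfying (dS^1∧dS^2)_− = 0. Let Û be a first-order operator Û F := Σ_i (u^1_i ∂^1_i F + u^2_i ∂^2_i F) (finite sum) whose coefficients u^1_i, u^2_i are polynomials in z with coefficients in R (i.e. (u^1_i)_− = (u^2_i)_− = 0). If (Û S^1)_+ = 0 and (Û S^2)_+ = 0, then Û S^1 = 0 and Û S^2 = 0. -/
/-!
Common setup for the second heavenly equation hierarchy (Bogdanov–Konopelchenko).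

Formal series in `z` with `z`-exponents bounded above are encoded as Hahn series
over `ℤ` in the variable `w = z⁻¹`: the coefficient at `n : ℤ` of `A : LS R` is
the coefficient of `z^{-n}` of the corresponding series.
-/

noncomputable section

/-- Series in `z` with `z`-exponents bounded above (the coefficient at `n : ℤ`
is the coefficient of `z^{-n}`). -/
abbrev LS (R : Type*) [CommRing R] : Type _ := HahnSeries ℤ R

/-- The variable `z`. -/
def zz {R : Type*} [CommRing R] : LS R := HahnSeries.single (-1 : ℤ) (1 : R)

/-- Constant series. -/
def CC {R : Type*} [CommRing R] (r : R) : LS R := HahnSeries.C r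

/-- `tail g = Σ_{k≥0} (g k) · z^{-(k+1)}` : a series in negative powers of `z`. -/
def tail {R : Type*} [CommRing R] (g : ℕ → R) : LS R :=
  HahnSeries.single (1 : ℤ) (1 : R) * HahnSeries.ofPowerSeries ℤ R (PowerSeries.mk g)

/-- `geom v = 1/(z - v) := Σ_{k≥0} v^k z^{-(k+1)}`. -/
def geom {R : Type*} [CommRing R] (v : R) : LS R := tail fun k => v ^ k

/-- The projection `(·)_-` keeping only negative powers of `z`. -/
def truncMinus {R : Type*} [CommRing R] (A : LS R) : LS R where
  coeff n := if 1 ≤ n then A.coeff n else 0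
  isPWO_support' := A.isPWO_support'.mono (fun n hn => by
    by_cases h : (1:ℤ) ≤ n <;> simp_all [Function.mem_support])

/-- The projection `(·)_+` keeping only nonnegative powers of `z`. -/
def truncPlus {R : Type*} [CommRing R] (A : LS R) : LS R where
  coeff n := if n ≤ 0 then A.coeff n else 0
  isPWO_support' := A.isPWO_support'.mono (fun n hn => by
    by_cases h : n ≤ (0:ℤ) <;> simp_all [Function.mem_support])

/-- A commutative ring equipped with pairwise commuting derivations `∂^{j+1}_n`
(`j : Fin 2`, `n : ℕ`) and distinguished elements `t^{j+1}_n` satisfying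
`∂^j_m t^k_n = δ_{jk} δ_{mn}`. -/
structure HeavenlySetting (R : Type*) [CommRing R] where
  d : Fin 2 → ℕ → R → R
  d_add : ∀ j n a b, d j n (a + b) = d j n a + d j n b
  d_mul : ∀ j n a b, d j n (a * b) = a * d j n b + d j n a * b
  d_comm : ∀ j n k m a, d j n (d k m a) = d k m (d j n a)
  t : Fin 2 → ℕ → R
  d_t : ∀ j n k m, d j n (t k m) = if j = k ∧ n = m then 1 else 0

/-- The data of a Lax–Sato pair: `Sneg j n` is the coefficient `S^{j+1}_{n+1}`
of `z^{-(n+1)}` in `S^{j+1} = Σ_{n≥0} t^{j+1}_n z^n + Σ_{n≥1} S^{j+1}_n z^{-n}`. -/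
structure LaxPair (R : Type*) [CommRing R] where
  Sneg : Fin 2 → ℕ → R

namespace HeavenlySetting

variable {R : Type*} [CommRing R] (H : HeavenlySetting R) (P : LaxPair R)

/-- The coefficient of `z^n` in `S^{j+1}`. -/
def coeffS (j : Fin 2) (n : ℤ) : R :=
  if 0 ≤ n then H.t j n.toNat else P.Sneg j (-n - 1).toNat

/-- The series `∂^{a+1}_m S^{j+1}` (its `z`-exponents are bounded above since
`∂^{a+1}_m t^{j+1}_n = δ_{aj} δ_{mn}`). -/
def dS (a : Fin 2) (m : ℕ) (j : Fin 2) : LS R :=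
  HahnSeries.single (-(m : ℤ)) (if a = j then 1 else 0)
    + tail fun k => H.d a m (P.Sneg j k)

/-- `S^{j+1}_x = ∂^1_0 S^{j+1}`. -/
def Sx (j : Fin 2) : LS R := H.dS P 0 0 j

/-- `S^{j+1}_y = ∂^2_0 S^{j+1}`. -/
def Sy (j : Fin 2) : LS R := H.dS P 1 0 j

/-- The condition `(dS^1 ∧ dS^2)_- = 0`. -/
def WedgeMinusZero : Prop :=
  ∀ a b : Fin 2, ∀ m n : ℕ,
    truncMinus (H.dS P a m 0 * H.dS P b n 1 - H.dS P b n 0 * H.dS P a m 1) = 0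

/-- The Lax–Sato equations `∂^1_n S^j = -{(z^n S^2)_+, S^j}`,
`∂^2_n S^j = {(z^n S^1)_+, S^j}` together with the bracket `{S^1,S^2} = 1`;
here `{f,g} = f_x g_y - f_y g_x` and `((z^n S^k)_+)_x = (z^n (S^k)_x)_+` etc. -/
def LaxSatoEqs : Prop :=
  (∀ n : ℕ, ∀ j : Fin 2,
    H.dS P 0 n j =
      -(truncPlus (zz ^ n * H.Sx P 1) * H.Sy P j
        - truncPlus (zz ^ n * H.Sy P 1) * H.Sx P j)) ∧
  (∀ n : ℕ, ∀ j : Fin 2,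
    H.dS P 1 n j =
      truncPlus (zz ^ n * H.Sx P 0) * H.Sy P j
        - truncPlus (zz ^ n * H.Sy P 0) * H.Sx P j) ∧
  (H.Sx P 0 * H.Sy P 1 - H.Sy P 0 * H.Sx P 1 = 1)

/-- Coefficient of `z'^k` in `D^{a+1}(z') S^{j+1}(z) = Σ_{m≥0} z'^{-m-1} ∂^{a+1}_m S^{j+1}(z)`. -/
def Dc (a j : Fin 2) (k : ℤ) : LS R :=
  if k ≤ -1 then H.dS P a (-k - 1).toNat j else 0

/-- Generating Lax–Sato equations
`(z'-z) D^1(z') S^j(z) = -{S^2(z'), S^j(z)}` and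
`(z'-z) D^2(z') S^j(z) = {S^1(z'), S^j(z)}`, stated coefficientwise in `z'`
(`k : ℤ` being the `z'`-exponent; both sides of each equation are series in `z`). -/
def GenLaxSato : Prop :=
  (∀ j : Fin 2, ∀ k : ℤ,
    H.Dc P 0 j (k - 1) - zz * H.Dc P 0 j k =
      -(CC (H.d 0 0 (H.coeffS P 1 k)) * H.Sy P j
        - CC (H.d 1 0 (H.coeffS P 1 k)) * H.Sx P j)) ∧
  (∀ j : Fin 2, ∀ k : ℤ,
    H.Dc P 1 j (k - 1) - zz * H.Dc P 1 j k =
      CC (H.d 0 0 (H.coeffS P 0 k)) * H.Sy P j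
        - CC (H.d 1 0 (H.coeffS P 0 k)) * H.Sx P j)

/-- `Θ` is a τ-function for the pair: `S^1_{n+1} = -∂^2_n Θ`, `S^2_{n+1} = ∂^1_n Θ`. -/
def IsTau (Θ : R) : Prop :=
  ∀ n : ℕ, P.Sneg 0 n = -H.d 1 n Θ ∧ P.Sneg 1 n = H.d 0 n Θ

/-- `σ` is a wave function with constant parameter `p`:
`(z-p) D^1(z)σ = -{S^2(z), σ}` and `(z-p) D^2(z)σ = {S^1(z), σ}`,
coefficientwise in `z^{-1}`, with `p` annihilated by all derivations. -/
def IsWave (σ p : R) : Prop :=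
  (∀ a : Fin 2, ∀ n : ℕ, H.d a n p = 0) ∧
  ((zz - CC p) * tail (fun n => H.d 0 n σ) =
    -(H.Sx P 1 * CC (H.d 1 0 σ) - H.Sy P 1 * CC (H.d 0 0 σ))) ∧
  ((zz - CC p) * tail (fun n => H.d 1 n σ) =
    H.Sx P 0 * CC (H.d 1 0 σ) - H.Sy P 0 * CC (H.d 0 0 σ))

end HeavenlySetting

section SupportLemmas

variable {R : Type*} [CommRing R]

theorem truncMinus_eq_zero_iff {A : LS R} :
    truncMinus A = 0 ↔ ∀ n : ℤ, 1 ≤ n → A.coeff n = 0 := by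
  constructor
  · intro h n hn
    have := congrArg (fun B : LS R => B.coeff n) h
    simpa [truncMinus, hn] using this
  · intro h
    ext n
    simpa [truncMinus] using h n

theorem truncPlus_eq_zero_iff {A : LS R} :
    truncPlus A = 0 ↔ ∀ n : ℤ, n ≤ 0 → A.coeff n = 0 := by
  constructor
  · intro h n hn
    have := congrArg (fun B : LS R => B.coeff n) h
    simpa [truncPlus, hn] using this
  · intro h
    ext n
    simpa [truncPlus] using h n

theorem eq_zero_of_truncMinus_of_truncPlus {A : LS R} (hm : truncMinus A = 0)
    (hp : truncPlus A = 0) : A = 0 := by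
  ext n
  rcases le_or_gt n 0 with h | h
  · exact truncPlus_eq_zero_iff.1 hp n h
  · exact truncMinus_eq_zero_iff.1 hm n h

theorem truncMinus_mul_eq_zero {A B : LS R} (hA : truncMinus A = 0) (hB : truncMinus B = 0) :
    truncMinus (A * B) = 0 := by
  rw [truncMinus_eq_zero_iff] at *
  intro n hn
  rw [HahnSeries.coeff_mul]
  refine Finset.sum_eq_zero fun ij hij => ?_
  rw [Finset.mem_antidiagonal] at hij
  rcases le_or_gt 1 ij.1 with h | h
  · rw [hA _ h, zero_mul]
  · rw [hB _ (by omega), mul_zero]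

theorem truncMinus_sum_eq_zero {ι : Type*} {s : Finset ι} {f : ι → LS R}
    (h : ∀ i ∈ s, truncMinus (f i) = 0) : truncMinus (∑ i ∈ s, f i) = 0 := by
  simp only [truncMinus_eq_zero_iff] at *
  intro n hn
  rw [HahnSeries.coeff_sum]
  exact Finset.sum_eq_zero fun i hi => h i hi n hn

theorem truncPlus_sub_eq_zero {A B : LS R} (hA : truncPlus A = 0) (hB : truncPlus B = 0) :
    truncPlus (A - B) = 0 := by
  rw [truncPlus_eq_zero_iff] at *
  intro n hn
  rw [HahnSeries.coeff_sub, hA n hn, hB n hn, sub_zero]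

theorem truncPlus_add_eq_zero {A B : LS R} (hA : truncPlus A = 0) (hB : truncPlus B = 0) :
    truncPlus (A + B) = 0 := by
  rw [truncPlus_eq_zero_iff] at *
  intro n hn
  rw [HahnSeries.coeff_add, hA n hn, hB n hn, add_zero]

/-- A series in negative powers of `z` times a series in nonpositive powers of `z` is a series in
negative powers of `z`. -/
theorem truncPlus_mul_eq_zero {A B : LS R} (hA : truncPlus A = 0)
    (hB : ∀ n < 0, B.coeff n = 0) : truncPlus (A * B) = 0 := by
  rw [truncPlus_eq_zero_iff] at *
  intro n hn
  rw [HahnSeries.coeff_mul]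
  refine Finset.sum_eq_zero fun ij hij => ?_
  rw [Finset.mem_antidiagonal] at hij
  rcases le_or_gt ij.1 0 with h | h
  · rw [hA _ h, zero_mul]
  · rw [hB _ (by omega), mul_zero]

theorem truncPlus_tail (g : ℕ → R) : truncPlus (tail g) = 0 := by
  rw [truncPlus_eq_zero_iff]
  intro n hn
  have h : n = (n - 1) + 1 := by ring
  rw [tail, h, HahnSeries.coeff_single_mul_add, one_mul, HahnSeries.ofPowerSeries_apply]
  refine HahnSeries.embDomain_of_notMem_range ?_
  rintro ⟨k, hk⟩
  simp at hk
  omega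

end SupportLemmas

namespace HeavenlySetting

variable {R : Type*} [CommRing R] (H : HeavenlySetting R) (P : LaxPair R)

theorem dS_zero_eq (a j : Fin 2) :
    H.dS P a 0 j = (if a = j then 1 else 0) + tail fun k => H.d a 0 (P.Sneg j k) := by
  rw [dS]
  split_ifs <;> simp

theorem coeff_dS_zero_of_neg (a j : Fin 2) (n : ℤ) (hn : n < 0) :
    (H.dS P a 0 j).coeff n = 0 := by
  rw [dS, HahnSeries.coeff_add, truncPlus_eq_zero_iff.1 (truncPlus_tail _) n hn.le,
    HahnSeries.coeff_single_of_ne (by simpa using hn.ne), add_zero]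

variable {H P}

/-- The bracket `{S^1, S^2}` equals `1`. -/
theorem WedgeMinusZero.bracket_eq_one (hwedge : H.WedgeMinusZero P) :
    H.dS P 0 0 0 * H.dS P 1 0 1 - H.dS P 1 0 0 * H.dS P 0 0 1 = 1 := by
  rw [← sub_eq_zero]
  apply eq_zero_of_truncMinus_of_truncPlus
  · rw [truncMinus_eq_zero_iff]
    intro n hn
    rw [HahnSeries.coeff_sub, truncMinus_eq_zero_iff.1 (hwedge 0 1 0 0) n hn,
      HahnSeries.coeff_one, if_neg (by omega), sub_zero]
  · have hx := truncPlus_tail fun k => H.d 0 0 (P.Sneg 0 k)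
    have hy := truncPlus_tail fun k => H.d 1 0 (P.Sneg 1 k)
    have hxy := truncPlus_tail fun k => H.d 0 0 (P.Sneg 1 k)
    have h₁ := truncPlus_mul_eq_zero hx (H.coeff_dS_zero_of_neg P 1 1)
    have h₂ := truncPlus_mul_eq_zero hxy (H.coeff_dS_zero_of_neg P 1 0)
    convert truncPlus_sub_eq_zero (truncPlus_add_eq_zero h₁ hy) h₂ using 2
    simp only [dS_zero_eq]
    simp
    ring

theorem WedgeMinusZero.operator_wedge_eq_zero (hwedge : H.WedgeMinusZero P)
    {M : ℕ} {u : Fin 2 → ℕ → LS R}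
    (hu : ∀ a : Fin 2, ∀ i : ℕ, truncMinus (u a i) = 0)
    (hplus : ∀ j : Fin 2,
      truncPlus (∑ a : Fin 2, ∑ i ∈ Finset.range M, u a i * H.dS P a i j) = 0) (b : Fin 2) :
    (∑ a : Fin 2, ∑ i ∈ Finset.range M, u a i * H.dS P a i 0) * H.dS P b 0 1
      - (∑ a : Fin 2, ∑ i ∈ Finset.range M, u a i * H.dS P a i 1) * H.dS P b 0 0 = 0 := by
  apply eq_zero_of_truncMinus_of_truncPlus
  · have h : truncMinus (∑ a : Fin 2, ∑ i ∈ Finset.range M,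
        u a i * (H.dS P a i 0 * H.dS P b 0 1 - H.dS P b 0 0 * H.dS P a i 1)) = 0 :=
      truncMinus_sum_eq_zero fun a _ => truncMinus_sum_eq_zero fun i _ =>
        truncMinus_mul_eq_zero (hu a i) (hwedge a b i 0)
    convert h using 2
    simp only [Finset.sum_mul, ← Finset.sum_sub_distrib]
    refine Finset.sum_congr rfl fun a _ => Finset.sum_congr rfl fun i _ => ?_
    ring
  · exact truncPlus_sub_eq_zero
      (truncPlus_mul_eq_zero (hplus 0) (H.coeff_dS_zero_of_neg P b 1))
      (truncPlus_mul_eq_zero (hplus 1) (H.coeff_dS_zero_of_neg P b 0))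

end HeavenlySetting

/-- If `(dS^1 ∧ dS^2)_- = 0` and `Û` is a first-order operator
`Û F = Σ_{a,i} u^a_i ∂^a_i F` (finite sum) whose coefficients `u^a_i` are
polynomials in `z` (i.e. `(u^a_i)_- = 0`), then `(Û S^1)_+ = 0` and
`(Û S^2)_+ = 0` imply `Û S^1 = 0` and `Û S^2 = 0`. -/
theorem heavenly_operator_lemma {R : Type*} [CommRing R]
    (H : HeavenlySetting R) (P : LaxPair R)
    (hwedge : H.WedgeMinusZero P)
    (M : ℕ) (u : Fin 2 → ℕ → LS R)
    (hu : ∀ a : Fin 2, ∀ i : ℕ, truncMinus (u a i) = 0)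
    (hplus : ∀ j : Fin 2,
      truncPlus (∑ a : Fin 2, ∑ i ∈ Finset.range M, u a i * H.dS P a i j) = 0) :
    ∀ j : Fin 2, (∑ a : Fin 2, ∑ i ∈ Finset.range M, u a i * H.dS P a i j) = 0 := by
  have hdet := hwedge.bracket_eq_one
  have hx := hwedge.operator_wedge_eq_zero hu hplus 0
  have hy := hwedge.operator_wedge_eq_zero hu hplus 1
  refine Fin.forall_fin_two.2 ⟨?_, ?_⟩
  · linear_combination
      -(∑ a : Fin 2, ∑ i ∈ Finset.range M, u a i * H.dS P a i 0) * hdet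
        + H.dS P 0 0 0 * hy - H.dS P 1 0 0 * hx
  · linear_combination
      -(∑ a : Fin 2, ∑ i ∈ Finset.range M, u a i * H.dS P a i 1) * hdet
        + H.dS P 0 0 1 * hy - H.dS P 1 0 1 * hx
end
end

section
/- Let (S^1,S^2) be a Lax–Sato pair satisfying the generating Lax–Sato equations and admitting a τ-function Θ. Then the following symmetric expressions for the Poisson brackets hold (as identities of double series in z′ and z): {S^1(z′), S^2(z)} = 1 + (z′−z) D^2(z′)D^1(z)Θ, {S^1(z′), S^1(z)} = (z−z′) D^2(z′)D^2(z)Θ, and {S^2(z′), S^2(z)} = (z−z′) D^1(z′)D^1(z)Θ. -/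
/-!
Common setup for the second heavenly equation hierarchy (Bogdanov–Konopelchenko).

Formal series in `z` with `z`-exponents bounded above are encoded as Hahn series
over `ℤ` in the variable `w = z⁻¹`: the coefficient at `n : ℤ` of `A : LS R` is
the coefficient of `z^{-n}` of the corresponding series.
-/

noncomputable section

namespace HeavenlySetting

variable {R : Type*} [CommRing R] (H : HeavenlySetting R) (P : LaxPair R)

theorem d_neg (j : Fin 2) (n : ℕ) (a : R) : H.d j n (-a) = -H.d j n a :=
  map_neg (AddMonoidHom.mk' (H.d j n) (H.d_add j n)) a

/-- The coefficient of `z'^k` in `(z' - z) D^{a+1}(z') S^{j+1}(z)`: the contributions of the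
times `t^{j+1}_n` telescope to `δ_{aj}`. -/
theorem Dc_sub_zz_mul_Dc (a j : Fin 2) (k : ℤ) :
    H.Dc P a j (k - 1) - zz * H.Dc P a j k =
      (if a = j ∧ k = 0 then 1 else 0)
        + (if k ≤ 0 then tail (fun n => H.d a (-k).toNat (P.Sneg j n)) else 0)
        - zz * (if k ≤ -1 then tail (fun n => H.d a (-k - 1).toNat (P.Sneg j n)) else 0) := by
  have hk : -(k - 1) - 1 = -k := by ring
  simp only [Dc, hk]
  rcases lt_trichotomy k 0 with h | rfl | h
  · have h1 : k - 1 ≤ -1 := by lia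
    have h2 : k ≤ -1 := by lia
    have h3 : zz * HahnSeries.single (-((-k - 1).toNat : ℤ)) (if a = j then (1 : R) else 0)
        = HahnSeries.single (-((-k).toNat : ℤ)) (if a = j then 1 else 0) := by
      rw [zz, HahnSeries.single_mul_single, one_mul,
        show -1 + -((-k - 1).toNat : ℤ) = -((-k).toNat : ℤ) by lia]
    simp only [h1, h2, h.le, h.ne, if_true, and_false, if_false, dS, mul_add, h3]
    ring
  · by_cases h : a = j <;> simp [dS, h]
  · have h1 : ¬ k - 1 ≤ -1 := by lia
    have h2 : ¬ k ≤ -1 := by lia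
    simp [h1, h2, h.not_ge, h.ne']

end HeavenlySetting

theorem tail_neg {R : Type*} [CommRing R] (g : ℕ → R) :
    tail (fun n => -g n) = -tail g := by
  have h : PowerSeries.mk (fun n => -g n) = -PowerSeries.mk g := by
    ext n
    simp
  rw [tail, h, map_neg, mul_neg, tail]

/-- For a Lax–Sato pair satisfying the generating Lax–Sato
equations and admitting a τ-function `Θ`, the symmetric expressions for the
Poisson brackets hold (stated coefficientwise in `z'`, with `k : ℤ` the
`z'`-exponent; each coefficient is a series in `z`):
`{S^1(z'),S^2(z)} = 1 + (z'-z) D^2(z')D^1(z)Θ`,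
`{S^1(z'),S^1(z)} = (z-z') D^2(z')D^2(z)Θ`,
`{S^2(z'),S^2(z)} = (z-z') D^1(z')D^1(z)Θ`. -/
theorem heavenly_symmetric_brackets {R : Type*} [CommRing R]
    (H : HeavenlySetting R) (P : LaxPair R) (Θ : R)
    (hgen : H.GenLaxSato P) (hτ : H.IsTau P Θ) :
    (∀ k : ℤ,
      CC (H.d 0 0 (H.coeffS P 0 k)) * H.Sy P 1 - CC (H.d 1 0 (H.coeffS P 0 k)) * H.Sx P 1
        = (if k = 0 then 1 else 0)
          + (if k ≤ 0 then tail (fun n => H.d 1 (-k).toNat (H.d 0 n Θ)) else 0)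
          - zz * (if k ≤ -1 then tail (fun n => H.d 1 (-k - 1).toNat (H.d 0 n Θ)) else 0)) ∧
    (∀ k : ℤ,
      CC (H.d 0 0 (H.coeffS P 0 k)) * H.Sy P 0 - CC (H.d 1 0 (H.coeffS P 0 k)) * H.Sx P 0
        = zz * (if k ≤ -1 then tail (fun n => H.d 1 (-k - 1).toNat (H.d 1 n Θ)) else 0)
          - (if k ≤ 0 then tail (fun n => H.d 1 (-k).toNat (H.d 1 n Θ)) else 0)) ∧
    (∀ k : ℤ,
      CC (H.d 0 0 (H.coeffS P 1 k)) * H.Sy P 1 - CC (H.d 1 0 (H.coeffS P 1 k)) * H.Sx P 1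
        = zz * (if k ≤ -1 then tail (fun n => H.d 0 (-k - 1).toNat (H.d 0 n Θ)) else 0)
          - (if k ≤ 0 then tail (fun n => H.d 0 (-k).toNat (H.d 0 n Θ)) else 0)) := by
  obtain ⟨hgen₁, hgen₂⟩ := hgen
  have h₁ : P.Sneg 0 = fun n => -H.d 1 n Θ := funext fun n => (hτ n).1
  have h₂ : P.Sneg 1 = fun n => H.d 0 n Θ := funext fun n => (hτ n).2
  refine ⟨fun k => ?_, fun k => ?_, fun k => ?_⟩
  · rw [← hgen₂, H.Dc_sub_zz_mul_Dc, h₂]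
    simp
  · rw [← hgen₂, H.Dc_sub_zz_mul_Dc, h₁]
    simp only [H.d_neg, tail_neg]
    by_cases h0 : k ≤ 0 <;> by_cases h1 : k ≤ -1 <;> simp [h0, h1, neg_add_eq_sub]
  · rw [← neg_inj, ← hgen₁, H.Dc_sub_zz_mul_Dc, h₂]
    simp
end
end

section
/- Let (S^1,S^2) be a Lax–Sato pair satisfying the Lax–Sato equations ∂^2_n S^1 = {(z^n S^1)_+, S^1} for all n ≥ 0, and suppose there exist φ_0, …, φ_{N−1} ∈ R such that ∂^2_N S^1 = Σ_{i=0}^{N−1} φ_i ∂^2_i S^1 (an identity of series in z^{−1}). Set H^2_n := (z^n S^1)_+, P(z) := ∂_x H^2_N − Σ_{i=0}^{N−1} φ_i ∂_x H^2_i and Q(z) := ∂_y H^2_N − Σ_{i=0}^{N−1} φ_i ∂_y H^2_i. Then P is a monic polynomial in z of degree N, Q is a polynomial in z of degree at most N−1, and P(z)·S^1_y = Q(z)·S^1_x; i.e. the ratio S^1_y/S^1_x is a rational function of z with (at most) N poles. -/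
/-!
Common setup for the second heavenly equation hierarchy (Bogdanov–Konopelchenko).

Formal series in `z` with `z`-exponents bounded above are encoded as Hahn series
over `ℤ` in the variable `w = z⁻¹`: the coefficient at `n : ℤ` of `A : LS R` is
the coefficient of `z^{-n}` of the corresponding series.
-/

noncomputable section

namespace HeavenlySetting

variable {R : Type*} [CommRing R]

/-- `P(z) := ∂_x H^2_N - Σ_{i<N} φ_i ∂_x H^2_i`, where `H^2_n = (z^n S^1)_+`
(so `∂_x H^2_n = (z^n S^1_x)_+`). -/
def redP (H : HeavenlySetting R) (P : LaxPair R) (N : ℕ) (φ : ℕ → R) : LS R :=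
  truncPlus (zz ^ N * H.Sx P 0)
    - ∑ i ∈ Finset.range N, CC (φ i) * truncPlus (zz ^ i * H.Sx P 0)

/-- `Q(z) := ∂_y H^2_N - Σ_{i<N} φ_i ∂_y H^2_i`, where `H^2_n = (z^n S^1)_+`. -/
def redQ (H : HeavenlySetting R) (P : LaxPair R) (N : ℕ) (φ : ℕ → R) : LS R :=
  truncPlus (zz ^ N * H.Sy P 0)
    - ∑ i ∈ Finset.range N, CC (φ i) * truncPlus (zz ^ i * H.Sy P 0)

end HeavenlySetting

theorem zz_pow {R : Type*} [CommRing R] (n : ℕ) :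
    (zz : LS R) ^ n = HahnSeries.single (-(n : ℤ)) 1 := by
  simp [zz, HahnSeries.single_pow]

theorem coeff_zz_pow_mul {R : Type*} [CommRing R] (n : ℕ) (A : LS R) (k : ℤ) :
    (zz ^ n * A).coeff k = A.coeff (k + n) := by
  have h := HahnSeries.coeff_single_mul_add (r := (1 : R)) (x := A) (a := k + n) (b := -(n : ℤ))
  rwa [add_neg_cancel_right, one_mul, ← zz_pow] at h

theorem coeff_tail_of_nonpos {R : Type*} [CommRing R] (g : ℕ → R) {k : ℤ} (hk : k ≤ 0) :
    (tail g).coeff k = 0 := by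
  have h := HahnSeries.coeff_single_mul_add (r := (1 : R))
    (x := HahnSeries.ofPowerSeries ℤ R (PowerSeries.mk g)) (a := k - 1) (b := 1)
  rw [sub_add_cancel, one_mul] at h
  rw [tail, h, HahnSeries.ofPowerSeries_apply]
  refine HahnSeries.embDomain_of_notMem_range ?_
  rintro ⟨m, hm⟩
  have hm' : (m : ℤ) = k - 1 := hm
  omega

theorem coeff_truncPlus {R : Type*} [CommRing R] (A : LS R) (k : ℤ) :
    (truncPlus A).coeff k = if k ≤ 0 then A.coeff k else 0 := rfl

theorem coeff_CC_mul {R : Type*} [CommRing R] (r : R) (A : LS R) (k : ℤ) :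
    (CC r * A).coeff k = r * A.coeff k := by
  rw [CC, HahnSeries.C_mul_eq_smul, HahnSeries.coeff_smul, smul_eq_mul]

namespace HeavenlySetting

variable {R : Type*} [CommRing R] (H : HeavenlySetting R) (P : LaxPair R)

theorem coeff_Sx_zero_of_nonpos {k : ℤ} (hk : k ≤ 0) :
    (H.Sx P 0).coeff k = if k = 0 then 1 else 0 := by
  simp [Sx, dS, coeff_tail_of_nonpos _ hk]

theorem coeff_Sy_zero_of_nonpos {k : ℤ} (hk : k ≤ 0) : (H.Sy P 0).coeff k = 0 := by
  simp [Sy, dS, coeff_tail_of_nonpos _ hk]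

theorem coeff_redP (N : ℕ) (φ : ℕ → R) (k : ℤ) :
    (H.redP P N φ).coeff k = if k ≤ 0 then (H.Sx P 0).coeff (k + N)
      - ∑ i ∈ Finset.range N, φ i * (H.Sx P 0).coeff (k + i) else 0 := by
  split_ifs with hk <;>
    simp [redP, HahnSeries.coeff_sum, coeff_CC_mul, coeff_truncPlus, coeff_zz_pow_mul, hk]

theorem coeff_redQ (N : ℕ) (φ : ℕ → R) (k : ℤ) :
    (H.redQ P N φ).coeff k = if k ≤ 0 then (H.Sy P 0).coeff (k + N)
      - ∑ i ∈ Finset.range N, φ i * (H.Sy P 0).coeff (k + i) else 0 := by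
  split_ifs with hk <;>
    simp [redQ, HahnSeries.coeff_sum, coeff_CC_mul, coeff_truncPlus, coeff_zz_pow_mul, hk]

theorem coeff_redP_of_le (N : ℕ) (φ : ℕ → R) {k : ℤ} (hk : k ≤ -(N : ℤ)) :
    (H.redP P N φ).coeff k = if k = -(N : ℤ) then 1 else 0 := by
  rw [coeff_redP, if_pos (by omega), Finset.sum_eq_zero, sub_zero,
    coeff_Sx_zero_of_nonpos H P (by omega)]
  · simp only [eq_neg_iff_add_eq_zero]
  · intro i hi
    have hi' := Finset.mem_range.mp hi
    rw [coeff_Sx_zero_of_nonpos H P (by omega), if_neg (by omega), mul_zero]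

theorem coeff_redQ_of_le (N : ℕ) (φ : ℕ → R) {k : ℤ} (hk : k ≤ -(N : ℤ)) :
    (H.redQ P N φ).coeff k = 0 := by
  rw [coeff_redQ, if_pos (by omega), Finset.sum_eq_zero, sub_zero,
    coeff_Sy_zero_of_nonpos H P (by omega)]
  intro i hi
  have hi' := Finset.mem_range.mp hi
  rw [coeff_Sy_zero_of_nonpos H P (by omega), mul_zero]

end HeavenlySetting

/-- If the pair satisfies `∂^2_n S^1 = {(z^n S^1)_+, S^1}` for all `n`
and `∂^2_N S^1 = Σ_{i<N} φ_i ∂^2_i S^1`, then `P` is a monic polynomial in `z` of degree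
`N`, `Q` is a polynomial in `z` of degree at most `N-1`, and `P · S^1_y = Q · S^1_x`
(so `S^1_y / S^1_x` is rational in `z` with at most `N` poles). Recall that the
coefficient of `z^m` is the coefficient at `-m : ℤ` of the Hahn series. -/
theorem heavenly_N_reduction_rational {R : Type*} [CommRing R]
    (H : HeavenlySetting R) (P : LaxPair R)
    (hLS : ∀ n : ℕ, H.dS P 1 n 0 =
      truncPlus (zz ^ n * H.Sx P 0) * H.Sy P 0 - truncPlus (zz ^ n * H.Sy P 0) * H.Sx P 0)
    (N : ℕ) (φ : ℕ → R)
    (hdep : H.dS P 1 N 0 = ∑ i ∈ Finset.range N, CC (φ i) * H.dS P 1 i 0) :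
    ((H.redP P N φ).coeff (-(N : ℤ)) = 1
      ∧ (∀ k : ℤ, k < -(N : ℤ) → (H.redP P N φ).coeff k = 0)
      ∧ (∀ k : ℤ, 1 ≤ k → (H.redP P N φ).coeff k = 0))
    ∧ ((∀ k : ℤ, k ≤ -(N : ℤ) → (H.redQ P N φ).coeff k = 0)
      ∧ (∀ k : ℤ, 1 ≤ k → (H.redQ P N φ).coeff k = 0))
    ∧ H.redP P N φ * H.Sy P 0 = H.redQ P N φ * H.Sx P 0 := by
  refine ⟨⟨?_, fun k hk => ?_, fun k hk => ?_⟩, ⟨fun k hk => ?_, fun k hk => ?_⟩, ?_⟩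
  · rw [H.coeff_redP_of_le P N φ le_rfl, if_pos rfl]
  · rw [H.coeff_redP_of_le P N φ hk.le, if_neg hk.ne]
  · rw [H.coeff_redP, if_neg (by omega)]
  · exact H.coeff_redQ_of_le P N φ hk
  · rw [H.coeff_redQ, if_neg (by omega)]
  · simp only [hLS, mul_sub, Finset.sum_sub_distrib] at hdep
    simp only [HeavenlySetting.redP, HeavenlySetting.redQ, sub_mul, Finset.sum_mul, mul_assoc]
    linear_combination hdep
end
end

section
/- Let (S^1,S^2) be a Lax–Sato pair satisfying the generating Lax–Sato equations and admitting a τ-function Θ, and let σ ∈ R be a wave function with constant parameter p. Then σ is an infinitesimal symmetry of the generating heavenly equation: D^2(z)σ_x − D^1(z)σ_y − {D^1(z)σ, D^2(z)Θ} − {D^1(z)Θ, D^2(z)σ} = 0, coefficientwise in z^{−1} (i.e. δΘ = σ satisfies the linearization of the equation D^2(z)Θ_x − D^1(z)Θ_y − {D^1(z)Θ, D^2(z)Θ} = 0). -/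
/-!
Common setup for the second heavenly equation hierarchy (Bogdanov–Konopelchenko).

Formal series in `z` with `z`-exponents bounded above are encoded as Hahn series
over `ℤ` in the variable `w = z⁻¹`: the coefficient at `n : ℤ` of `A : LS R` is
the coefficient of `z^{-n}` of the corresponding series.
-/

noncomputable section

section

open PowerSeries

/-- The extension of a derivation of `R` to power series, acting coefficientwise. -/
def Derivation.powerSeriesMap {R : Type*} [CommRing R] (D : Derivation ℤ R R) :
    Derivation ℤ R⟦X⟧ R⟦X⟧ :=
  Derivation.mk'
    (AddMonoidHom.toIntLinearMap
      { toFun := fun f => PowerSeries.mk fun n => D (coeff n f)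
        map_zero' := by ext; simp
        map_add' := fun f g => by ext; simp })
    (fun f g => by
      ext n
      change coeff n (PowerSeries.mk fun n => D (coeff n (f * g))) =
        coeff n (f * (PowerSeries.mk fun n => D (coeff n g))
          + g * (PowerSeries.mk fun n => D (coeff n f)))
      simp only [coeff_mk, coeff_mul, map_sum, Derivation.leibniz, smul_eq_mul, map_add,
        Finset.sum_add_distrib]
      congr 1
      exact Finset.Nat.sum_antidiagonal_swap
        (f := fun q : ℕ × ℕ => coeff q.1 g * D (coeff q.2 f)))

@[simp]
theorem Derivation.coeff_powerSeriesMap {R : Type*} [CommRing R] (D : Derivation ℤ R R)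
    (f : R⟦X⟧) (n : ℕ) : coeff n (D.powerSeriesMap f) = D (coeff n f) :=
  coeff_mk n fun n => D (coeff n f)

@[simp]
theorem Derivation.powerSeriesMap_C {R : Type*} [CommRing R] (D : Derivation ℤ R R) (r : R) :
    D.powerSeriesMap (PowerSeries.C r) = PowerSeries.C (D r) := by
  ext n
  simp only [Derivation.coeff_powerSeriesMap, coeff_C]
  split_ifs <;> simp

@[simp]
theorem Derivation.powerSeriesMap_X {R : Type*} [CommRing R] (D : Derivation ℤ R R) :
    D.powerSeriesMap (X : R⟦X⟧) = 0 := by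
  ext n
  simp only [Derivation.coeff_powerSeriesMap, coeff_X]
  split_ifs <;> simp

theorem tail_eq_ofPowerSeries {R : Type*} [CommRing R] (g : ℕ → R) :
    tail g = HahnSeries.ofPowerSeries ℤ R (X * PowerSeries.mk g) := by
  rw [map_mul, HahnSeries.ofPowerSeries_X, tail]

theorem zz_sub_CC_mul_tail {R : Type*} [CommRing R] (p : R) (g : ℕ → R) :
    (zz - CC p) * tail g =
      HahnSeries.ofPowerSeries ℤ R ((1 - PowerSeries.C p * X) * PowerSeries.mk g) := by
  have hz : (zz : LS R) * HahnSeries.single (1 : ℤ) (1 : R) = 1 := by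
    rw [zz, HahnSeries.single_mul_single]
    simp
  simp only [map_mul, map_sub, map_one, HahnSeries.ofPowerSeries_X, HahnSeries.ofPowerSeries_C,
    tail, CC]
  linear_combination HahnSeries.ofPowerSeries ℤ R (PowerSeries.mk g) * hz

namespace HeavenlySetting

variable {R : Type*} [CommRing R] (H : HeavenlySetting R) (P : LaxPair R)

/-- The map `H.d a n` as a bundled derivation. -/
def deriv (a : Fin 2) (n : ℕ) : Derivation ℤ R R :=
  Derivation.mk' (AddMonoidHom.toIntLinearMap (AddMonoidHom.mk' (H.d a n) (H.d_add a n)))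
    (fun f g => by simp [H.d_mul, mul_comm])

@[simp]
theorem deriv_apply (a : Fin 2) (n : ℕ) (f : R) : H.deriv a n f = H.d a n f := rfl

/-- The series `∂^{a+1}_0 S^{j+1}` as a power series in `z⁻¹`. -/
def gradS (a j : Fin 2) : R⟦X⟧ :=
  PowerSeries.C (if a = j then 1 else 0) + X * PowerSeries.mk fun k => H.d a 0 (P.Sneg j k)

theorem dS_zero_eq_s12 (a j : Fin 2) :
    H.dS P a 0 j = HahnSeries.ofPowerSeries ℤ R (H.gradS P a j) := by
  rw [dS, gradS, map_add, ← tail_eq_ofPowerSeries, HahnSeries.ofPowerSeries_C]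
  rfl

theorem coeff_zero_gradS (a j : Fin 2) :
    coeff 0 (H.gradS P a j) = if a = j then 1 else 0 := by
  simp [gradS]

theorem coeff_succ_gradS (a j : Fin 2) (n : ℕ) :
    coeff (n + 1) (H.gradS P a j) = H.d a 0 (P.Sneg j n) := by
  rw [gradS, map_add, coeff_succ_X_mul, coeff_mk, coeff_C, if_neg n.succ_ne_zero, zero_add]

theorem powerSeriesMap_gradS_comm (a b j : Fin 2) :
    (H.deriv a 0).powerSeriesMap (H.gradS P b j) =
      (H.deriv b 0).powerSeriesMap (H.gradS P a j) := by
  ext n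
  simp only [Derivation.coeff_powerSeriesMap]
  cases n with
  | zero => simp only [coeff_zero_gradS]; split_ifs <;> simp only [map_zero, Derivation.map_one_eq_zero]
  | succ n => simp only [coeff_succ_gradS, deriv_apply]; exact H.d_comm _ _ _ _ _

theorem coeff_tail_succ (g : ℕ → R) (n : ℕ) : (tail g).coeff ((n : ℤ) + 1) = g n := by
  rw [tail_eq_ofPowerSeries]
  have := HahnSeries.ofPowerSeries_apply_coeff (Γ := ℤ) (X * PowerSeries.mk g) (n + 1)
  simpa [coeff_succ_X_mul] using this

theorem coeff_tail_zero (g : ℕ → R) : (tail g).coeff 0 = 0 := by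
  rw [tail_eq_ofPowerSeries]
  have := HahnSeries.ofPowerSeries_apply_coeff (Γ := ℤ) (X * PowerSeries.mk g) 0
  simpa using this

theorem coeff_zz_mul (A : LS R) (n : ℤ) : (zz * A).coeff n = A.coeff (n + 1) := by
  have := HahnSeries.coeff_single_mul_add (r := (1 : R)) (x := A) (a := n + 1) (b := (-1 : ℤ))
  simpa [zz] using this

theorem coeff_zero_dS_succ (a j : Fin 2) (m : ℕ) : (H.dS P a (m + 1) j).coeff 0 = 0 := by
  rw [dS, HahnSeries.coeff_add, coeff_tail_zero, HahnSeries.coeff_single_of_ne (by omega), add_zero]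

theorem coeff_dS_succ (a j : Fin 2) (m n : ℕ) :
    (H.dS P a m j).coeff ((n : ℤ) + 1) = H.d a m (P.Sneg j n) := by
  rw [dS, HahnSeries.coeff_add, coeff_tail_succ, HahnSeries.coeff_single_of_ne (by omega), zero_add]

variable {H P}

theorem GenLaxSato.dS_recursion (hgen : H.GenLaxSato P) (m : ℕ) :
    H.dS P 0 (m + 1) 0 - zz * H.dS P 0 m 0 =
      CC (coeff (m + 1) (H.gradS P 1 1)) * H.dS P 0 0 0
        - CC (coeff (m + 1) (H.gradS P 0 1)) * H.dS P 1 0 0 := by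
  have h := hgen.1 0 (-(m : ℤ) - 1)
  have e1 : (-(-(m : ℤ) - 1 - 1) - 1).toNat = m + 1 := by omega
  have e2 : (-(-(m : ℤ) - 1) - 1).toNat = m := by omega
  rw [Dc, Dc, if_pos (by omega), if_pos (by omega), coeffS, if_neg (by omega), e1, e2] at h
  rw [h, coeff_succ_gradS, coeff_succ_gradS, Sx, Sy]
  ring

theorem GenLaxSato.coeff_recursion (hgen : H.GenLaxSato P) (m n : ℕ) :
    (H.dS P 0 (m + 1) 0).coeff n - H.d 0 m (P.Sneg 0 n) =
      coeff (m + 1) (H.gradS P 1 1) * coeff n (H.gradS P 0 0)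
        - coeff (m + 1) (H.gradS P 0 1) * coeff n (H.gradS P 1 0) := by
  have h := congrArg (fun A : LS R => A.coeff (n : ℤ)) (hgen.dS_recursion m)
  simpa only [HahnSeries.coeff_sub, coeff_zz_mul, coeff_dS_succ, dS_zero_eq_s12, CC,
    HahnSeries.C_mul_eq_smul, HahnSeries.coeff_smul, smul_eq_mul,
    HahnSeries.ofPowerSeries_apply_coeff] using h

/-- The normalization `{S^1, S^2} = 1` follows from the generating Lax–Sato equations. -/
theorem GenLaxSato.bracket_eq_one (hgen : H.GenLaxSato P) :
    H.gradS P 1 1 * H.gradS P 0 0 - H.gradS P 0 1 * H.gradS P 1 0 = 1 := by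
  ext N
  rw [map_sub, coeff_mul, coeff_mul, ← Finset.sum_sub_distrib,
    Finset.Nat.sum_antidiagonal_eq_sum_range_succ_mk]
  cases N with
  | zero => simp [coeff_zero_gradS]
  | succ N =>
    have hmid : ∀ i ∈ Finset.range N,
        coeff (i + 1) (H.gradS P 1 1) * coeff (N + 1 - (i + 1)) (H.gradS P 0 0)
          - coeff (i + 1) (H.gradS P 0 1) * coeff (N + 1 - (i + 1)) (H.gradS P 1 0)
        = H.d 0 (i + 1) (P.Sneg 0 (N - (i + 1))) - H.d 0 i (P.Sneg 0 (N - i)) := by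
      intro i hi
      rw [Finset.mem_range] at hi
      obtain ⟨k, rfl⟩ : ∃ k, N = i + 1 + k := ⟨N - (i + 1), by omega⟩
      have e1 : i + 1 + k + 1 - (i + 1) = k + 1 := by omega
      have e2 : i + 1 + k - (i + 1) = k := by omega
      have e3 : i + 1 + k - i = k + 1 := by omega
      rw [e1, e2, e3, ← hgen.coeff_recursion i (k + 1)]
      push_cast
      rw [coeff_dS_succ]
    have hlast := hgen.coeff_recursion N 0
    rw [Nat.cast_zero, coeff_zero_dS_succ] at hlast
    rw [Finset.sum_range_succ', Finset.sum_range_succ, Finset.sum_congr rfl hmid,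
      Finset.sum_range_sub (fun i => H.d 0 i (P.Sneg 0 (N - i)))]
    simp only [Nat.sub_self, Nat.sub_zero]
    rw [← hlast]
    simp only [coeff_zero_gradS, coeff_succ_gradS, coeff_one, if_neg N.succ_ne_zero, if_true,
      zero_ne_one, if_false]
    ring

/-- The linearized heavenly equation for a wave function, as an identity of power series
in `z⁻¹`. -/
theorem GenLaxSato.linearized_eq_zero (hgen : H.GenLaxSato P) {σ p : R} (hwave : H.IsWave P σ p) :
    (H.deriv 0 0).powerSeriesMap (PowerSeries.mk fun n => H.d 0 n σ) * H.gradS P 1 0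
      - (H.deriv 1 0).powerSeriesMap (PowerSeries.mk fun n => H.d 0 n σ) * H.gradS P 0 0
      - H.gradS P 0 1 * (H.deriv 1 0).powerSeriesMap (PowerSeries.mk fun n => H.d 1 n σ)
      + H.gradS P 1 1 * (H.deriv 0 0).powerSeriesMap (PowerSeries.mk fun n => H.d 1 n σ) = 0 := by
  obtain ⟨hp, h1, h2⟩ := hwave
  rw [zz_sub_CC_mul_tail, Sx, Sy, dS_zero_eq_s12, dS_zero_eq_s12, CC, CC,
    ← HahnSeries.ofPowerSeries_C, ← HahnSeries.ofPowerSeries_C, ← map_mul, ← map_mul,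
    ← map_sub] at h1 h2
  rw [← map_neg] at h1
  replace h1 := HahnSeries.ofPowerSeries_injective h1
  replace h2 := HahnSeries.ofPowerSeries_injective h2
  have hunit : IsUnit (1 - PowerSeries.C p * X : R⟦X⟧) := by
    simp [PowerSeries.isUnit_iff_constantCoeff]
  have hU : ∀ a : Fin 2, (H.deriv a 0).powerSeriesMap (1 - PowerSeries.C p * X) = 0 := by
    intro a
    simp [hp]
  have h1x := congrArg (H.deriv 0 0).powerSeriesMap h1
  have h1y := congrArg (H.deriv 1 0).powerSeriesMap h1
  have h2x := congrArg (H.deriv 0 0).powerSeriesMap h2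
  have h2y := congrArg (H.deriv 1 0).powerSeriesMap h2
  have hbx := congrArg (H.deriv 0 0).powerSeriesMap hgen.bracket_eq_one
  have hby := congrArg (H.deriv 1 0).powerSeriesMap hgen.bracket_eq_one
  have hσ : H.d 1 0 (H.d 0 0 σ) = H.d 0 0 (H.d 1 0 σ) := H.d_comm _ _ _ _ _
  have hc : ∀ j : Fin 2, (H.deriv 1 0).powerSeriesMap (H.gradS P 0 j) =
      (H.deriv 0 0).powerSeriesMap (H.gradS P 1 j) := H.powerSeriesMap_gradS_comm P 1 0
  simp only [map_sub _ (_ * H.gradS P _ _), map_sub _ (H.gradS P _ _ * _), map_neg,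
    Derivation.leibniz, hU, smul_eq_mul, mul_zero, add_zero,
    Derivation.map_one_eq_zero, Derivation.powerSeriesMap_C, deriv_apply, hσ, hc]
    at h1x h1y h2x h2y hbx hby
  refine hunit.mul_left_cancel ?_
  linear_combination H.gradS P 1 0 * h1x - H.gradS P 0 0 * h1y - H.gradS P 0 1 * h2y
    + H.gradS P 1 1 * h2x - PowerSeries.C (H.d 0 0 σ) * hby + PowerSeries.C (H.d 1 0 σ) * hbx

theorem IsTau.gradS_fst {Θ : R} (hτ : H.IsTau P Θ) (a : Fin 2) :
    H.gradS P a 0 = PowerSeries.C (if a = 0 then 1 else 0)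
      - X * PowerSeries.mk fun n => H.d a 0 (H.d 1 n Θ) := by
  have h : (PowerSeries.mk fun k => H.d a 0 (P.Sneg 0 k)) =
      -PowerSeries.mk fun n => H.d a 0 (H.d 1 n Θ) := by
    ext n
    rw [coeff_mk, map_neg, coeff_mk, (hτ n).1, ← deriv_apply, map_neg, deriv_apply]
  rw [gradS, h]
  ring

theorem IsTau.gradS_snd {Θ : R} (hτ : H.IsTau P Θ) (a : Fin 2) :
    H.gradS P a 1 = PowerSeries.C (if a = 1 then 1 else 0)
      + X * PowerSeries.mk fun n => H.d a 0 (H.d 0 n Θ) := by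
  simp only [gradS, (hτ _).2]

theorem powerSeriesMap_mk (H : HeavenlySetting R) (a : Fin 2) (g : ℕ → R) :
    (H.deriv a 0).powerSeriesMap (PowerSeries.mk g) = PowerSeries.mk fun n => H.d a 0 (g n) := by
  ext n
  simp

end HeavenlySetting

end

/-- If the pair satisfies the generating Lax–Sato equations and
admits a τ-function `Θ`, and `σ` is a wave function with constant parameter `p`,
then `δΘ = σ` is an infinitesimal symmetry:
`D^2(z)σ_x - D^1(z)σ_y - {D^1(z)σ, D^2(z)Θ} - {D^1(z)Θ, D^2(z)σ} = 0`
coefficientwise in `z^{-1}`. -/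
theorem heavenly_wave_is_symmetry {R : Type*} [CommRing R]
    (H : HeavenlySetting R) (P : LaxPair R) (Θ : R)
    (hgen : H.GenLaxSato P) (hτ : H.IsTau P Θ)
    (σ p : R) (hwave : H.IsWave P σ p) :
    tail (fun n => H.d 1 n (H.d 0 0 σ)) - tail (fun n => H.d 0 n (H.d 1 0 σ))
      - (tail (fun n => H.d 0 0 (H.d 0 n σ)) * tail (fun n => H.d 1 0 (H.d 1 n Θ))
         - tail (fun n => H.d 1 0 (H.d 0 n σ)) * tail (fun n => H.d 0 0 (H.d 1 n Θ)))
      - (tail (fun n => H.d 0 0 (H.d 0 n Θ)) * tail (fun n => H.d 1 0 (H.d 1 n σ))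
         - tail (fun n => H.d 1 0 (H.d 0 n Θ)) * tail (fun n => H.d 0 0 (H.d 1 n σ))) = 0 := by
  have h := congrArg (HahnSeries.ofPowerSeries ℤ R)
    (congrArg (PowerSeries.X * ·) (hgen.linearized_eq_zero hwave))
  simp only [hτ.gradS_fst, hτ.gradS_snd, HeavenlySetting.powerSeriesMap_mk] at h
  have hx : (fun n => H.d 1 n (H.d 0 0 σ)) = fun n => H.d 0 0 (H.d 1 n σ) :=
    funext fun n => H.d_comm _ _ _ _ _
  have hy : (fun n => H.d 0 n (H.d 1 0 σ)) = fun n => H.d 1 0 (H.d 0 n σ) :=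
    funext fun n => H.d_comm _ _ _ _ _
  simp only [hx, hy, tail_eq_ofPowerSeries, ← map_mul, ← map_sub]
  rw [mul_zero, map_zero] at h
  rw [← h]
  congr 1
  simp only [if_true, one_ne_zero, zero_ne_one, if_false, map_one, map_zero]
  ring
end
end

section
/- Let (S^1,S^2) be a Lax–Sato pair satisfying the generating Lax–Sato equations. Let s^2(z) be a formal series of the form s^2(z) = Σ_{n≥0} t^2_n z^n + Σ_{n≥1} s^2_n z^{−n} with s^2_n ∈ R, satisfying the associated linear equations (z′−z) D^1(z′) s^2(z) = −{S^2(z′), s^2(z)} and (z′−z) D^2(z′) s^2(z) = {S^1(z′), s^2(z)} coefficientwise in z′, and suppose (s^2)_+ = (S^2)_+. Then s^2 = S^2 up to a series in z with constant coefficients: the series φ := s^2 − S^2 satisfies ∂^1_n φ = ∂^2_n φ = 0 (coefficientwise) for all n ≥ 0. -/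
/-!
Common setup for the second heavenly equation hierarchy (Bogdanov–Konopelchenko).

Formal series in `z` with `z`-exponents bounded above are encoded as Hahn series
over `ℤ` in the variable `w = z⁻¹`: the coefficient at `n : ℤ` of `A : LS R` is
the coefficient of `z^{-n}` of the corresponding series.
-/

noncomputable section

namespace HeavenlySetting

variable {R : Type*} [CommRing R]

/-- The series `∂^{a+1}_m s^2` for a formal series
`s^2(z) = Σ_{n≥0} t^2_n z^n + Σ_{n≥1} s^2_n z^{-n}` with negative-part
coefficients `s : ℕ → R` (`s n = s^2_{n+1}`). -/
def ds2 (H : HeavenlySetting R) (s : ℕ → R) (a : Fin 2) (m : ℕ) : LS R :=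
  HahnSeries.single (-(m : ℤ)) (if a = 1 then 1 else 0) + tail fun k => H.d a m (s k)

/-- Coefficient of `z'^k` in `D^{a+1}(z') s^2(z)`. -/
def Dcs (H : HeavenlySetting R) (s : ℕ → R) (a : Fin 2) (k : ℤ) : LS R :=
  if k ≤ -1 then H.ds2 s a (-k - 1).toNat else 0

end HeavenlySetting

theorem tail_coeff_natCast_add_one {R : Type*} [CommRing R] (g : ℕ → R) (n : ℕ) :
    (tail g).coeff ((n : ℤ) + 1) = g n := by
  unfold tail
  rw [HahnSeries.coeff_single_mul_add, HahnSeries.ofPowerSeries_apply_coeff]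
  simp

theorem tail_coeff_zero {R : Type*} [CommRing R] (g : ℕ → R) : (tail g).coeff 0 = 0 := by
  unfold tail
  rw [HahnSeries.coeff_single_mul, HahnSeries.ofPowerSeries_apply, one_mul]
  refine HahnSeries.embDomain_of_notMem_range ?_
  rintro ⟨n, hn⟩
  have h : (n : ℤ) = 0 - 1 := hn
  omega

theorem zz_mul_coeff {R : Type*} [CommRing R] (A : LS R) (n : ℤ) :
    (zz * A).coeff n = A.coeff (n + 1) := by
  unfold zz
  rw [HahnSeries.coeff_single_mul, one_mul, sub_neg_eq_add]

theorem CC_mul_coeff {R : Type*} [CommRing R] (r : R) (A : LS R) (n : ℤ) :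
    (CC r * A).coeff n = r * A.coeff n := by
  unfold CC
  rw [HahnSeries.C_mul_eq_smul, HahnSeries.coeff_smul, smul_eq_mul]

/-- A doubly indexed family of series in negative powers of `z` which satisfies
`F a (m + 1) - z F a m ∈ R (F 1 0) + R (F 0 0)` vanishes. -/
theorem eq_zero_of_tail_recursion {R : Type*} [CommRing R] (f : Fin 2 → ℕ → ℕ → R)
    (hf : ∀ a m, ∃ α β : R,
      tail (f a (m + 1)) - zz * tail (f a m) = CC α * tail (f 1 0) + CC β * tail (f 0 0)) :
    ∀ n a m, f a m n = 0 := by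
  intro n
  induction n with
  | zero =>
    intro a m
    obtain ⟨α, β, h⟩ := hf a m
    have h0 := congrArg (fun A : LS R => A.coeff 0) h
    have htail := tail_coeff_natCast_add_one (f a m) 0
    simp only [HahnSeries.coeff_sub, HahnSeries.coeff_add, zz_mul_coeff, CC_mul_coeff,
      tail_coeff_zero] at h0
    rw [Nat.cast_zero] at htail
    rw [htail] at h0
    simpa using h0
  | succ n ih =>
    intro a m
    obtain ⟨α, β, h⟩ := hf a m
    have hn := congrArg (fun A : LS R => A.coeff ((n : ℤ) + 1)) h
    have htail := tail_coeff_natCast_add_one (f a m) (n + 1)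
    simp only [HahnSeries.coeff_sub, HahnSeries.coeff_add, zz_mul_coeff, CC_mul_coeff,
      tail_coeff_natCast_add_one, ih] at hn
    rw [Nat.cast_add, Nat.cast_one] at htail
    rw [htail] at hn
    simpa using hn

theorem tail_sub {R : Type*} [CommRing R] (f g : ℕ → R) :
    tail (fun k => f k - g k) = tail f - tail g := by
  have h : PowerSeries.mk (fun k => f k - g k) = PowerSeries.mk f - PowerSeries.mk g := by
    ext n
    simp
  unfold tail
  rw [h, map_sub, mul_sub]

namespace HeavenlySetting

variable {R : Type*} [CommRing R] (H : HeavenlySetting R) (P : LaxPair R)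

theorem d_sub (a : Fin 2) (m : ℕ) (u v : R) : H.d a m (u - v) = H.d a m u - H.d a m v := by
  have h := H.d_add a m (u - v) v
  rw [sub_add_cancel] at h
  rw [h, add_sub_cancel_right]

theorem tail_d_sub_eq (s : ℕ → R) (a : Fin 2) (m : ℕ) :
    tail (fun n => H.d a m (s n - P.Sneg 1 n)) = H.ds2 s a m - H.dS P a m 1 := by
  simp only [d_sub, tail_sub, ds2, dS, add_sub_add_left_eq_sub]

theorem Dc_negSucc (a j : Fin 2) (m : ℕ) : H.Dc P a j (Int.negSucc m) = H.dS P a m j := by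
  have h : (-Int.negSucc m - 1).toNat = m := by omega
  rw [Dc, if_pos (by omega), h]

theorem Dcs_negSucc (s : ℕ → R) (a : Fin 2) (m : ℕ) :
    H.Dcs s a (Int.negSucc m) = H.ds2 s a m := by
  have h : (-Int.negSucc m - 1).toNat = m := by omega
  rw [Dcs, if_pos (by omega), h]

end HeavenlySetting

/-- If the pair satisfies the generating Lax–Sato equations and
`s^2(z) = Σ_{n≥0} t^2_n z^n + Σ_{n≥1} s^2_n z^{-n}` (so `(s^2)_+ = (S^2)_+`) satisfies
the associated linear equations `(z'-z) D^1(z') s^2(z) = -{S^2(z'), s^2(z)}` and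
`(z'-z) D^2(z') s^2(z) = {S^1(z'), s^2(z)}` coefficientwise in `z'`, then
`φ := s^2 - S^2` is killed by all the derivations (coefficientwise). -/
theorem heavenly_uniqueness_lemma {R : Type*} [CommRing R]
    (H : HeavenlySetting R) (P : LaxPair R)
    (hgen : H.GenLaxSato P) (s : ℕ → R)
    (h1 : ∀ k : ℤ,
      H.Dcs s 0 (k - 1) - zz * H.Dcs s 0 k =
        -(CC (H.d 0 0 (H.coeffS P 1 k)) * H.ds2 s 1 0
          - CC (H.d 1 0 (H.coeffS P 1 k)) * H.ds2 s 0 0))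
    (h2 : ∀ k : ℤ,
      H.Dcs s 1 (k - 1) - zz * H.Dcs s 1 k =
        CC (H.d 0 0 (H.coeffS P 0 k)) * H.ds2 s 1 0
          - CC (H.d 1 0 (H.coeffS P 0 k)) * H.ds2 s 0 0) :
    ∀ a : Fin 2, ∀ m n : ℕ, H.d a m (s n - P.Sneg 1 n) = 0 := by
  intro a m n
  refine eq_zero_of_tail_recursion (fun a m n => H.d a m (s n - P.Sneg 1 n)) ?_ n a m
  intro a m
  simp only [H.tail_d_sub_eq P]
  have hk : Int.negSucc m - 1 = Int.negSucc (m + 1) := by omega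
  obtain ⟨hgen1, hgen2⟩ := hgen
  match a with
  | 0 =>
    have hs := h1 (Int.negSucc m)
    have hS := hgen1 1 (Int.negSucc m)
    rw [hk] at hs hS
    simp only [H.Dcs_negSucc, H.Dc_negSucc, HeavenlySetting.Sx, HeavenlySetting.Sy] at hs hS
    refine ⟨-H.d 0 0 (H.coeffS P 1 (Int.negSucc m)), H.d 1 0 (H.coeffS P 1 (Int.negSucc m)), ?_⟩
    rw [CC, map_neg, ← CC]
    linear_combination hs - hS
  | 1 =>
    have hs := h2 (Int.negSucc m)
    have hS := hgen2 1 (Int.negSucc m)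
    rw [hk] at hs hS
    simp only [H.Dcs_negSucc, H.Dc_negSucc, HeavenlySetting.Sx, HeavenlySetting.Sy] at hs hS
    refine ⟨H.d 0 0 (H.coeffS P 0 (Int.negSucc m)), -H.d 1 0 (H.coeffS P 0 (Int.negSucc m)), ?_⟩
    rw [CC, CC, map_neg, ← CC, ← CC]
    linear_combination hs - hS
end
end
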